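/- For a piecewise-linear obstacle skeleton forming a closed loop L in ℝ³, the total 'magnetic field' integral of a closed robot loop γ disjoint from L, computed as the sum over segments of the analytic Biot–Savart contributions, equals the linking number of γ and L; in particular it is 0 when γ does not enclose L and ±1 when γ encloses L once. -/

import Mathlib

open Set

noncomputable section

/-- Dot product on ℝ³. -/
def dot3 (u v : Fin 3 → ℝ) : ℝ := u 0 * v 0 + u 1 * v 1 + u 2 * v 2

/-- Euclidean norm on ℝ³. -/
def norm3 (v : Fin 3 → ℝ) : ℝ := Real.sqrt (dot3 v v)

/-- Cross product on ℝ³. -/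
def cross3 (u v : Fin 3 → ℝ) : Fin 3 → ℝ := crossProduct u v

/-- The analytic Biot–Savart contribution of the segment `[o, o']` (unit current) at `r`. -/
def Phi (o o' r : Fin 3 → ℝ) : Fin 3 → ℝ :=
  let p := o - r
  let p' := o' - r
  let d := (norm3 (o' - o))⁻¹ ^ 2 • cross3 (o' - o) (cross3 p p')
  (norm3 d)⁻¹ ^ 2 • ((norm3 p')⁻¹ • cross3 d p' - (norm3 p)⁻¹ • cross3 d p)

/-- Total magnetic field of the closed polygonal loop with vertices `P 0, …, P m = P 0`. -/
def Bfield (m : ℕ) (P : ℕ → Fin 3 → ℝ) (r : Fin 3 → ℝ) : Fin 3 → ℝ :=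
  (4 * Real.pi)⁻¹ • ∑ i ∈ Finset.range m, Phi (P i) (P (i + 1)) r

/-- Piecewise-linear parametrization (on `[0, m]`) of the closed polygonal loop with
vertices `P 0, …, P m = P 0`. -/
def polyLoop (P : ℕ → Fin 3 → ℝ) (t : ℝ) : Fin 3 → ℝ :=
  P (⌊t⌋.toNat) + (t - ⌊t⌋) • (P (⌊t⌋.toNat + 1) - P (⌊t⌋.toNat))

/-- The Gauss linking number (as a real double integral) of the closed curve `γ` (on `[0,1]`)
and the polygonal loop `polyLoop P` (on `[0,m]`). -/
def gaussLinkingIntegral (m : ℕ) (P : ℕ → Fin 3 → ℝ) (γ : ℝ → Fin 3 → ℝ) : ℝ :=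
  (4 * Real.pi)⁻¹ *
    ∫ s in (0 : ℝ)..1, ∫ t in (0 : ℝ)..(m : ℝ),
      dot3 (cross3 (deriv γ s) (deriv (polyLoop P) t)) (γ s - polyLoop P t)
        / norm3 (γ s - polyLoop P t) ^ 3

section TwoByTwo

open scoped Matrix.Norms.Operator

/-- Sandwiching by a singular `2 × 2` matrix is multiplication by a scalar. -/
lemma mul_mul_self_of_det_eq_zero {p : Matrix (Fin 2) (Fin 2) ℂ} (hp : p.det = 0)
    (X : Matrix (Fin 2) (Fin 2) ℂ) : p * X * p = (p * X).trace • p := by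
  rw [Matrix.det_fin_two] at hp
  ext i j
  fin_cases i <;> fin_cases j <;>
    simp [Matrix.mul_apply, Matrix.trace_fin_two, Fin.sum_univ_two]
  · linear_combination -X 1 1 * hp
  · linear_combination X 0 1 * hp
  · linear_combination X 1 0 * hp
  · linear_combination -X 0 0 * hp

/-- For singular `2 × 2` matrices `p X q` is a multiple of `p q` as soon as `tr (q p) ≠ 0`. -/
lemma mul_mul_eq_smul_mul {p q : Matrix (Fin 2) (Fin 2) ℂ} (hp : p.det = 0) (hq : q.det = 0)
    (ht : (q * p).trace ≠ 0) (X : Matrix (Fin 2) (Fin 2) ℂ) :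
    p * X * q = ((q * p * X).trace / (q * p).trace) • (p * q) := by
  have h1 : p * q * p = (q * p).trace • p := by
    rw [mul_mul_self_of_det_eq_zero hp, Matrix.trace_mul_comm]
  have h2 : q * (p * X) * q = (q * p * X).trace • q := by
    rw [mul_mul_self_of_det_eq_zero hq, mul_assoc]
  have h3 : (q * p).trace • (p * X * q) = (q * p * X).trace • (p * q) := by
    rw [← Matrix.mul_smul p, ← h2, ← Matrix.smul_mul, ← Matrix.smul_mul, ← h1]
    simp only [mul_assoc]
  rw [div_eq_inv_mul, mul_smul, ← h3, smul_smul, inv_mul_cancel₀ ht, one_smul]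

/-- The ordered product `p₀ p₁ ⋯ pₖ`. -/
def chainProd (p : ℕ → Matrix (Fin 2) (Fin 2) ℂ) : ℕ → Matrix (Fin 2) (Fin 2) ℂ
  | 0 => p 0
  | k + 1 => chainProd p k * p (k + 1)

lemma chainProd_mul_last {p : ℕ → Matrix (Fin 2) (Fin 2) ℂ} (hid : ∀ k, p k * p k = p k)
    (k : ℕ) : chainProd p k * p k = chainProd p k := by
  cases k with
  | zero => exact hid 0
  | succ k => rw [chainProd, mul_assoc, hid]

lemma first_mul_chainProd {p : ℕ → Matrix (Fin 2) (Fin 2) ℂ} (hid : p 0 * p 0 = p 0)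
    (k : ℕ) : p 0 * chainProd p k = chainProd p k := by
  induction k with
  | zero => exact hid
  | succ k ih => rw [chainProd, ← mul_assoc, ih]

lemma chainProd_ne_zero {p : ℕ → Matrix (Fin 2) (Fin 2) ℂ} (hid : ∀ k, p k * p k = p k)
    (hdet : ∀ k, (p k).det = 0) (h0 : p 0 ≠ 0) {m : ℕ}
    (ht : ∀ k < m, (p (k + 1) * p k).trace ≠ 0) : ∀ k ≤ m, chainProd p k ≠ 0 := by
  intro k
  induction k with
  | zero => exact fun _ => h0
  | succ k ih =>
    intro hk hzero
    have h1 : chainProd p (k + 1) * p k = (p (k + 1) * p k).trace • chainProd p k := by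
      have h := mul_mul_self_of_det_eq_zero (hdet k) (p (k + 1))
      rw [chainProd]
      conv_lhs => rw [← chainProd_mul_last hid k]
      rw [mul_assoc, mul_assoc, ← mul_assoc (p k), h, Matrix.mul_smul, chainProd_mul_last hid,
        Matrix.trace_mul_comm]
    rw [hzero, zero_mul] at h1
    exact (smul_ne_zero (ht k hk) (ih (by omega))) h1.symm

/-- The closed product of a cyclic chain of rank one idempotents is a multiple of the first. -/
lemma chainProd_eq_trace_smul {p : ℕ → Matrix (Fin 2) (Fin 2) ℂ} (hid : ∀ k, p k * p k = p k)
    (hdet : (p 0).det = 0) {m : ℕ} (hm : p m = p 0) :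
    chainProd p m = (chainProd p m).trace • p 0 := by
  have h := mul_mul_self_of_det_eq_zero hdet (chainProd p m)
  have h' := chainProd_mul_last hid m
  rw [hm] at h'
  rwa [first_mul_chainProd (hid 0), h'] at h

/-- The contribution of an edge to the logarithmic derivative of a chain of projections. -/
def edgeRate (p p' : ℕ → Matrix (Fin 2) (Fin 2) ℂ) (k : ℕ) : ℂ :=
  ((p (k + 1) * p k * p' k).trace + (p (k + 1) * p k * p' (k + 1)).trace)
    / (p (k + 1) * p k).trace

lemma hasDerivAt_chainProd {p : ℝ → ℕ → Matrix (Fin 2) (Fin 2) ℂ}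
    {p' : ℕ → Matrix (Fin 2) (Fin 2) ℂ} {s : ℝ}
    (hid : ∀ k, p s k * p s k = p s k) (hdet : ∀ k, (p s k).det = 0)
    (hd : ∀ k, HasDerivAt (fun u => p u k) (p' k) s)
    (hp' : ∀ k, p' k = p' k * p s k + p s k * p' k) {m : ℕ}
    (ht : ∀ k < m, (p s (k + 1) * p s k).trace ≠ 0) : ∀ k ≤ m,
    HasDerivAt (fun u => chainProd (p u) k)
      ((∑ i ∈ Finset.range k, edgeRate (p s) p' i) • chainProd (p s) k
        + p' 0 * chainProd (p s) k + chainProd (p s) k * p' k) s := by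
  intro k
  induction k with
  | zero =>
    intro _
    simpa [chainProd, ← hp' 0] using hd 0
  | succ k ih =>
    intro hk
    convert! (ih (by omega)).mul (hd (k + 1)) using 1
    have h1 : chainProd (p s) k * p' k * p s (k + 1)
        = ((p s (k + 1) * p s k * p' k).trace / (p s (k + 1) * p s k).trace)
          • (chainProd (p s) k * p s (k + 1)) := by
      conv_lhs => rw [← chainProd_mul_last hid k]
      rw [mul_assoc, mul_assoc, ← mul_assoc (p s k),
        mul_mul_eq_smul_mul (hdet k) (hdet (k + 1)) (ht k hk), Matrix.mul_smul, ← mul_assoc,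
        chainProd_mul_last hid]
    have h2 : chainProd (p s) k * p' (k + 1) * p s (k + 1)
        = ((p s (k + 1) * p s k * p' (k + 1)).trace / (p s (k + 1) * p s k).trace)
          • (chainProd (p s) k * p s (k + 1)) := by
      conv_lhs => rw [← chainProd_mul_last hid k]
      rw [mul_assoc, mul_assoc, ← mul_assoc (p s k),
        mul_mul_eq_smul_mul (hdet k) (hdet (k + 1)) (ht k hk), Matrix.mul_smul, ← mul_assoc,
        chainProd_mul_last hid]
    conv_rhs => rw [hp' (k + 1)]
    rw [Finset.sum_range_succ, edgeRate, add_div, chainProd, add_mul, add_mul, mul_add, h1,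
      ← mul_assoc, ← mul_assoc, h2, Matrix.smul_mul]
    simp only [add_smul, mul_assoc]
    abel

/-- Logarithmic derivative of the trace of the closed product of a cyclic chain of rank one
projections. -/
lemma hasDerivAt_trace_chainProd {p : ℝ → ℕ → Matrix (Fin 2) (Fin 2) ℂ}
    {p' : ℕ → Matrix (Fin 2) (Fin 2) ℂ} {s : ℝ}
    (hid : ∀ k, p s k * p s k = p s k) (hdet : ∀ k, (p s k).det = 0)
    (hd : ∀ k, HasDerivAt (fun u => p u k) (p' k) s)
    (hp' : ∀ k, p' k = p' k * p s k + p s k * p' k) {m : ℕ}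
    (hm : p s m = p s 0) (hm' : p' m = p' 0)
    (ht : ∀ k < m, (p s (k + 1) * p s k).trace ≠ 0) :
    HasDerivAt (fun u => (chainProd (p u) m).trace)
      ((∑ i ∈ Finset.range m, edgeRate (p s) p' i) * (chainProd (p s) m).trace) s := by
  have h := hasDerivAt_chainProd hid hdet hd hp' ht m le_rfl
  have h1 := ((Matrix.traceLinearMap (Fin 2) ℝ ℂ).toContinuousLinearMap.hasFDerivAt
    (x := chainProd (p s) m)).comp_hasDerivAt s h
  have h0 : (p s 0 * p' 0).trace = 0 := by
    have e : p s 0 * p' 0 * p s 0 = 0 := by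
      have := congrArg (fun x => p s 0 * x) (hp' 0)
      simpa [mul_add, ← mul_assoc, hid] using this
    have := congrArg Matrix.trace e
    rwa [Matrix.trace_mul_comm, ← mul_assoc, hid, Matrix.trace_zero] at this
  have h2 := chainProd_eq_trace_smul hid (hdet 0) hm
  refine h1.congr_deriv ?_
  change Matrix.trace (_ : Matrix (Fin 2) (Fin 2) ℂ) = _
  rw [hm', Matrix.trace_add, Matrix.trace_add, Matrix.trace_smul, smul_eq_mul]
  have e1 : (p' 0 * chainProd (p s) m).trace = 0 := by
    rw [h2, Matrix.mul_smul, Matrix.trace_smul, Matrix.trace_mul_comm, h0, smul_zero]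
  have e2 : (chainProd (p s) m * p' 0).trace = 0 := by
    rw [Matrix.trace_mul_comm, e1]
  rw [e1, e2, add_zero, add_zero]

end TwoByTwo

section EuclideanGeometry

lemma dot3_self_nonneg (v : Fin 3 → ℝ) : 0 ≤ dot3 v v := by
  unfold dot3
  nlinarith [mul_self_nonneg (v 0), mul_self_nonneg (v 1), mul_self_nonneg (v 2)]

lemma norm3_nonneg (v : Fin 3 → ℝ) : 0 ≤ norm3 v := Real.sqrt_nonneg _

lemma norm3_sq (v : Fin 3 → ℝ) : norm3 v ^ 2 = dot3 v v := Real.sq_sqrt (dot3_self_nonneg v)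

lemma dot3_self_eq_zero {v : Fin 3 → ℝ} : dot3 v v = 0 ↔ v = 0 := by
  refine ⟨fun h => ?_, fun h => by simp [h, dot3]⟩
  unfold dot3 at h
  ext i
  fin_cases i <;> simp <;>
    nlinarith [mul_self_nonneg (v 0), mul_self_nonneg (v 1), mul_self_nonneg (v 2)]

lemma norm3_pos {v : Fin 3 → ℝ} (hv : v ≠ 0) : 0 < norm3 v :=
  Real.sqrt_pos.2 (lt_of_le_of_ne (dot3_self_nonneg v) fun h => hv (dot3_self_eq_zero.1 h.symm))

lemma continuous_norm3 : Continuous norm3 := by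
  unfold norm3 dot3
  fun_prop

lemma neg_norm3_mul_le_dot3 (a b : Fin 3 → ℝ) : -(norm3 a * norm3 b) ≤ dot3 a b := by
  refine (abs_le_of_sq_le_sq' ?_ (mul_nonneg (norm3_nonneg a) (norm3_nonneg b))).1
  rw [mul_pow, norm3_sq, norm3_sq]
  unfold dot3
  nlinarith [sq_nonneg (a 0 * b 1 - a 1 * b 0), sq_nonneg (a 1 * b 2 - a 2 * b 1),
    sq_nonneg (a 0 * b 2 - a 2 * b 0)]

/-- If the segment `[a, b]` avoids the origin then `a`, `b` are not antiparallel. -/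
lemma norm3_mul_add_dot3_pos {a b : Fin 3 → ℝ} (h : ∀ t ∈ Icc (0 : ℝ) 1, a + t • (b - a) ≠ 0) :
    0 < norm3 a * norm3 b + dot3 a b := by
  refine lt_of_le_of_ne (by linarith [neg_norm3_mul_le_dot3 a b]) fun h0 => ?_
  have ha : a ≠ 0 := by simpa using h 0 (by simp)
  have hna := norm3_pos ha
  have hnb := norm3_nonneg b
  refine h (norm3 a / (norm3 a + norm3 b)) ⟨by positivity, ?_⟩ ?_
  · rw [div_le_one (by positivity)]
    linarith
  · have h1 : norm3 b • a + norm3 a • b = 0 := by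
      rw [← dot3_self_eq_zero]
      have ea := norm3_sq a
      have eb := norm3_sq b
      simp only [dot3, Pi.add_apply, Pi.smul_apply, smul_eq_mul] at *
      linear_combination (-norm3 b ^ 2) * ea - norm3 a ^ 2 * eb - 2 * norm3 a * norm3 b * h0
    have h2 : a + (norm3 a / (norm3 a + norm3 b)) • (b - a)
        = (norm3 a + norm3 b)⁻¹ • (norm3 b • a + norm3 a • b) := by
      ext i
      simp only [Pi.add_apply, Pi.smul_apply, Pi.sub_apply, smul_eq_mul]
      field_simp
      ring
    rw [h2, h1, smul_zero]

/-- The unit vector in the direction of `a`. -/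
def unit3 (a : Fin 3 → ℝ) : Fin 3 → ℝ := (norm3 a)⁻¹ • a

lemma dot3_unit3_self {a : Fin 3 → ℝ} (ha : a ≠ 0) : dot3 (unit3 a) (unit3 a) = 1 := by
  have h := norm3_sq a
  have h' := (norm3_pos ha).ne'
  simp only [dot3, unit3, Pi.smul_apply, smul_eq_mul] at *
  field_simp
  linarith

/-- The derivative of `unit3` at `a` in the direction `v`. -/
def unit3Deriv (a v : Fin 3 → ℝ) : Fin 3 → ℝ :=
  (norm3 a)⁻¹ • v - (dot3 a v * (norm3 a)⁻¹ ^ 3) • a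

lemma hasDerivAt_norm3 {a : ℝ → Fin 3 → ℝ} {a' : Fin 3 → ℝ} {s : ℝ} (ha : HasDerivAt a a' s)
    (h0 : a s ≠ 0) : HasDerivAt (fun u => norm3 (a u)) (dot3 (a s) a' / norm3 (a s)) s := by
  have hc := hasDerivAt_pi.1 ha
  have h := ((((hc 0).mul (hc 0)).add ((hc 1).mul (hc 1))).add ((hc 2).mul (hc 2))).sqrt
    (by
      intro h
      exact h0 (dot3_self_eq_zero.1 h))
  refine h.congr_deriv ?_
  have hn := (norm3_pos h0).ne'
  change _ / (2 * norm3 (a s)) = _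
  unfold dot3
  field_simp
  ring

lemma hasDerivAt_unit3 {a : ℝ → Fin 3 → ℝ} {a' : Fin 3 → ℝ} {s : ℝ} (ha : HasDerivAt a a' s)
    (h0 : a s ≠ 0) : HasDerivAt (fun u => unit3 (a u)) (unit3Deriv (a s) a') s := by
  have hn := (norm3_pos h0).ne'
  refine (((hasDerivAt_norm3 ha h0).fun_inv hn).smul ha).congr_deriv ?_
  ext i
  simp only [unit3Deriv, Pi.add_apply, Pi.sub_apply, Pi.smul_apply, smul_eq_mul]
  field_simp
  ring

end EuclideanGeometry

section BlochProjection

/-- The traceless Hermitian matrix `(v · σ) / 2`. -/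
def halfPauli : (Fin 3 → ℝ) →ₗ[ℝ] Matrix (Fin 2) (Fin 2) ℂ where
  toFun v := !![(v 2 : ℂ) / 2, (v 0 - v 1 * Complex.I) / 2;
    (v 0 + v 1 * Complex.I) / 2, -(v 2 : ℂ) / 2]
  map_add' u v := by
    ext i j
    fin_cases i <;> fin_cases j <;> simp <;> ring
  map_smul' c v := by
    ext i j
    fin_cases i <;> fin_cases j <;> simp <;> ring

/-- The rank one projection `(1 + n · σ) / 2` attached to a unit vector `n`. -/
def bloch (n : Fin 3 → ℝ) : Matrix (Fin 2) (Fin 2) ℂ :=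
  (1 / 2 : ℂ) • 1 + halfPauli n

lemma bloch_eq (n : Fin 3 → ℝ) : bloch n = !![(1 + n 2 : ℂ) / 2, (n 0 - n 1 * Complex.I) / 2;
    (n 0 + n 1 * Complex.I) / 2, (1 - n 2 : ℂ) / 2] := by
  ext i j
  fin_cases i <;> fin_cases j <;> simp [bloch, halfPauli] <;> ring

lemma det_bloch {n : Fin 3 → ℝ} (hn : dot3 n n = 1) : (bloch n).det = 0 := by
  have h : (n 0 * n 0 + n 1 * n 1 + n 2 * n 2 : ℂ) = 1 := by
    unfold dot3 at hn
    exact_mod_cast hn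
  rw [bloch_eq, Matrix.det_fin_two_of]
  linear_combination (-1 / 4 : ℂ) * h + (n 1 : ℂ) ^ 2 / 4 * Complex.I_sq

lemma trace_bloch (n : Fin 3 → ℝ) : (bloch n).trace = 1 := by
  rw [bloch_eq, Matrix.trace_fin_two_of]
  ring

lemma bloch_mul_self {n : Fin 3 → ℝ} (hn : dot3 n n = 1) : bloch n * bloch n = bloch n := by
  have h := mul_mul_self_of_det_eq_zero (det_bloch hn) 1
  rwa [mul_one, trace_bloch, one_smul] at h

lemma trace_bloch_mul_bloch (m n : Fin 3 → ℝ) :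
    (bloch m * bloch n).trace = ((1 + dot3 m n) / 2 : ℝ) := by
  rw [bloch_eq, bloch_eq, Matrix.mul_fin_two, Matrix.trace_fin_two_of]
  simp only [dot3]
  push_cast
  linear_combination (-(m 1 : ℂ) * n 1 / 2) * Complex.I_sq

lemma trace_bloch_mul_bloch_mul_halfPauli_im (m n v : Fin 3 → ℝ) :
    (bloch m * bloch n * halfPauli v).trace.im = dot3 (cross3 m n) v / 4 := by
  rw [bloch_eq, bloch_eq, Matrix.mul_fin_two]
  simp [Matrix.trace_fin_two, halfPauli, dot3, cross3,
    cross_apply]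
  ring

/-- The scalar factor `∫₀¹ |a + τ (b - a)|⁻³ dτ`. -/
def segKernel (a b : Fin 3 → ℝ) : ℝ :=
  (norm3 a + norm3 b) / (norm3 a * norm3 b * (norm3 a * norm3 b + dot3 a b))

lemma dot3_unit3_unit3 (a b : Fin 3 → ℝ) :
    dot3 (unit3 a) (unit3 b) = dot3 a b / (norm3 a * norm3 b) := by
  simp only [dot3, unit3, Pi.smul_apply, smul_eq_mul]
  rw [div_eq_mul_inv, mul_inv]
  ring

lemma trace_bloch_unit3_ne_zero {a b : Fin 3 → ℝ} (ha : a ≠ 0) (hb : b ≠ 0)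
    (hD : 0 < norm3 a * norm3 b + dot3 a b) :
    (bloch (unit3 b) * bloch (unit3 a)).trace ≠ 0 := by
  have h1 := norm3_pos ha
  have h2 := norm3_pos hb
  rw [Matrix.trace_mul_comm, trace_bloch_mul_bloch, dot3_unit3_unit3, Complex.ofReal_ne_zero]
  have : (1 + dot3 a b / (norm3 a * norm3 b)) / 2
      = (norm3 a * norm3 b + dot3 a b) / (2 * (norm3 a * norm3 b)) := by
    field_simp
  rw [this]
  positivity

/-- The imaginary part of the logarithmic derivative carried by an edge is half of its
Biot–Savart field. -/
lemma im_edgeRate_bloch {a : ℕ → Fin 3 → ℝ} {v : Fin 3 → ℝ} {k : ℕ} (ha : a k ≠ 0)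
    (hb : a (k + 1) ≠ 0) (hD : 0 < norm3 (a k) * norm3 (a (k + 1)) + dot3 (a k) (a (k + 1))) :
    (edgeRate (fun i => bloch (unit3 (a i)))
      (fun i => halfPauli (unit3Deriv (a i) (-v))) k).im
      = dot3 (cross3 (a k) (a (k + 1))) v * segKernel (a k) (a (k + 1)) / 2 := by
  have h1 := (norm3_pos ha).ne'
  have h2 := (norm3_pos hb).ne'
  rw [edgeRate, trace_bloch_mul_bloch, Complex.div_ofReal_im, Complex.add_im,
    trace_bloch_mul_bloch_mul_halfPauli_im, trace_bloch_mul_bloch_mul_halfPauli_im,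
    dot3_unit3_unit3, segKernel]
  generalize a (k + 1) = b at *
  generalize a k = a at *
  have hne : dot3 b a / (norm3 b * norm3 a) + 1 = (norm3 a * norm3 b + dot3 a b)
      / (norm3 a * norm3 b) := by
    have : dot3 b a = dot3 a b := by unfold dot3; ring
    rw [this]
    field_simp
    ring
  have e1 : dot3 (cross3 (unit3 b) (unit3 a)) (unit3Deriv a (-v))
      = dot3 (cross3 a b) v / (norm3 a ^ 2 * norm3 b) := by
    simp [dot3, unit3, unit3Deriv, cross3, cross_apply]
    field_simp
    ring
  have e2 : dot3 (cross3 (unit3 b) (unit3 a)) (unit3Deriv b (-v))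
      = dot3 (cross3 a b) v / (norm3 a * norm3 b ^ 2) := by
    simp [dot3, unit3, unit3Deriv, cross3, cross_apply]
    field_simp
    ring
  rw [add_comm (1 : ℝ), hne, e1, e2]
  have h3 := hD.ne'
  generalize norm3 a * norm3 b + dot3 a b = D at *
  field_simp
  ring

open scoped Matrix.Norms.Operator in
lemma hasDerivAt_bloch_unit3 {a : ℝ → Fin 3 → ℝ} {a' : Fin 3 → ℝ} {s : ℝ}
    (ha : HasDerivAt a a' s) (h0 : a s ≠ 0) :
    HasDerivAt (fun u => bloch (unit3 (a u))) (halfPauli (unit3Deriv (a s) a')) s :=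
  ((halfPauli.toContinuousLinearMap.hasFDerivAt (x := unit3 (a s))).comp_hasDerivAt s
    (hasDerivAt_unit3 ha h0)).const_add _

end BlochProjection

section BiotSavart

/-- The analytic field of a segment in closed form. -/
lemma Phi_eq_segKernel_smul {o o' r : Fin 3 → ℝ} (ha : o - r ≠ 0) (hb : o' - r ≠ 0) :
    Phi o o' r = segKernel (o - r) (o' - r) • cross3 (o - r) (o' - r) := by
  have he : o' - o = (o' - r) - (o - r) := by abel
  simp only [Phi, he]
  generalize o - r = a at *
  generalize o' - r = b at *
  by_cases hw : cross3 a b = 0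
  · have h0 : ∀ u, cross3 u 0 = 0 := fun u => by simp [cross3]
    have h0' : ∀ u, cross3 0 u = 0 := fun u => by simp [cross3]
    rw [hw]
    simp only [h0, h0', smul_zero, sub_self]
  have hea : norm3 (b - a) ≠ 0 := by
    refine (norm3_pos fun h => hw ?_).ne'
    rw [sub_eq_zero.1 h, cross3, cross_self]
  have hW : dot3 (cross3 a b) (cross3 a b)
      = (norm3 a * norm3 b + dot3 a b) * (norm3 a * norm3 b - dot3 a b) := by
    have h : dot3 (cross3 a b) (cross3 a b) = dot3 a a * dot3 b b - dot3 a b ^ 2 := by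
      simp [dot3, cross3, cross_apply]
      ring
    rw [h, ← norm3_sq, ← norm3_sq]
    ring
  have hW0 : dot3 (cross3 a b) (cross3 a b) ≠ 0 := fun h => hw (dot3_self_eq_zero.1 h)
  have hd : norm3 ((norm3 (b - a))⁻¹ ^ 2 • cross3 (b - a) (cross3 a b)) ^ 2
      = dot3 (cross3 a b) (cross3 a b) / norm3 (b - a) ^ 2 := by
    have h : dot3 (cross3 (b - a) (cross3 a b)) (cross3 (b - a) (cross3 a b))
        = norm3 (b - a) ^ 2 * dot3 (cross3 a b) (cross3 a b) := by
      rw [norm3_sq]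
      simp [dot3, cross3, cross_apply]
      ring
    have h' : ∀ (c : ℝ) (v : Fin 3 → ℝ), dot3 (c • v) (c • v) = c ^ 2 * dot3 v v := by
      intro c v
      simp [dot3]
      ring
    rw [norm3_sq, h', h]
    field_simp
  have hcb : cross3 ((norm3 (b - a))⁻¹ ^ 2 • cross3 (b - a) (cross3 a b)) b
      = ((norm3 b ^ 2 - dot3 a b) / norm3 (b - a) ^ 2) • cross3 a b := by
    rw [norm3_sq b, div_eq_inv_mul, ← inv_pow]
    generalize (norm3 (b - a))⁻¹ ^ 2 = c
    ext i
    fin_cases i <;> simp [dot3, cross3, cross_apply] <;> ring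
  have hca : cross3 ((norm3 (b - a))⁻¹ ^ 2 • cross3 (b - a) (cross3 a b)) a
      = ((dot3 a b - norm3 a ^ 2) / norm3 (b - a) ^ 2) • cross3 a b := by
    rw [norm3_sq a, div_eq_inv_mul, ← inv_pow]
    generalize (norm3 (b - a))⁻¹ ^ 2 = c
    ext i
    fin_cases i <;> simp [dot3, cross3, cross_apply] <;> ring
  rw [inv_pow, hd, hcb, hca, smul_smul, smul_smul, ← sub_smul, smul_smul, segKernel]
  congr 1
  have h1 := (norm3_pos ha).ne'
  have h2 := (norm3_pos hb).ne'
  rw [hW] at hW0 ⊢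
  have h3 := left_ne_zero_of_mul hW0
  have h4 := right_ne_zero_of_mul hW0
  generalize dot3 a b = x at *
  generalize norm3 a = α at *
  generalize norm3 b = ρ at *
  field_simp
  ring

lemma segKernel_deriv_identity {α ρ β τ ε : ℝ} (hα : 0 < α) (hρ : 0 < ρ)
    (hρ2 : ρ ^ 2 = α ^ 2 + 2 * τ * β + τ ^ 2 * ε) (hD : 0 < α * ρ + (α ^ 2 + τ * β)) :
    (α + ρ) / (α * ρ * (α * ρ + (α ^ 2 + τ * β)))
      + τ * (((β + τ * ε) / ρ * (α * ρ * (α * ρ + (α ^ 2 + τ * β)))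
        - (α + ρ) * (α * ((β + τ * ε) / ρ) * (α * ρ + (α ^ 2 + τ * β))
          + α * ρ * (α * ((β + τ * ε) / ρ) + β)))
        / (α * ρ * (α * ρ + (α ^ 2 + τ * β))) ^ 2) = 1 / ρ ^ 3 := by
  obtain ⟨D, hDdef⟩ : ∃ D, D = α * ρ + (α ^ 2 + τ * β) := ⟨_, rfl⟩
  rw [← hDdef] at hD ⊢
  have key : ρ ^ 2 * (α + ρ) * D
      + τ * (-α * (β + τ * ε) * D - (α + ρ) * ρ * (α * (β + τ * ε) + ρ * β)) = α * D ^ 2 := by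
    rw [hDdef]
    linear_combination (α * (α * ρ + (α ^ 2 + τ * β)) + (α + ρ) * ρ * α) * hρ2
  have h1 := hα.ne'
  have h2 := hρ.ne'
  have h3 := hD.ne'
  field_simp
  linear_combination key

/-- An antiderivative of `τ ↦ |a + τ e|⁻³`. -/
lemma hasDerivAt_mul_segKernel {a e : Fin 3 → ℝ} {τ : ℝ} (ha : a ≠ 0) (hc : a + τ • e ≠ 0)
    (hD : 0 < norm3 a * norm3 (a + τ • e) + dot3 a (a + τ • e)) :
    HasDerivAt (fun u : ℝ => u * segKernel a (a + u • e)) (1 / norm3 (a + τ • e) ^ 3) τ := by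
  have hca : HasDerivAt (fun u : ℝ => a + u • e) e τ := by
    simpa using ((hasDerivAt_id τ).smul_const e).const_add a
  have hn := hasDerivAt_norm3 hca hc
  have hdot : HasDerivAt (fun u : ℝ => dot3 a (a + u • e)) (dot3 a e) τ := by
    have hi := hasDerivAt_pi.1 hca
    exact (((hi 0).const_mul (a 0)).add ((hi 1).const_mul (a 1))).add ((hi 2).const_mul (a 2))
  have hden := (hn.const_mul (norm3 a)).mul ((hn.const_mul (norm3 a)).add hdot)
  have h1 := norm3_pos ha
  have h2 := norm3_pos hc
  have h := (hasDerivAt_id τ).mul ((hn.const_add (norm3 a)).div hden (by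
    simp only [Pi.mul_apply, Pi.add_apply]
    positivity))
  refine h.congr_deriv ?_
  have e1 : dot3 a (a + τ • e) = norm3 a ^ 2 + τ * dot3 a e := by
    rw [norm3_sq]
    simp [dot3]
    ring
  have e2 : dot3 (a + τ • e) e = dot3 a e + τ * dot3 e e := by
    simp [dot3]
    ring
  have e3 : norm3 (a + τ • e) ^ 2 = norm3 a ^ 2 + 2 * τ * dot3 a e + τ ^ 2 * dot3 e e := by
    rw [norm3_sq, norm3_sq]
    simp [dot3]
    ring
  rw [e1] at hD
  rw [← segKernel_deriv_identity h1 h2 e3 hD]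
  simp only [Pi.mul_apply, Pi.add_apply, id, one_mul, e1, e2, Pi.div_apply]

lemma integral_one_div_norm3_pow {a b : Fin 3 → ℝ}
    (h : ∀ t ∈ Icc (0 : ℝ) 1, a + t • (b - a) ≠ 0) :
    IntervalIntegrable (fun τ => 1 / norm3 (a + τ • (b - a)) ^ 3) MeasureTheory.volume 0 1 ∧
      ∫ τ in (0 : ℝ)..1, 1 / norm3 (a + τ • (b - a)) ^ 3 = segKernel a b := by
  have hintg : IntervalIntegrable (fun τ => 1 / norm3 (a + τ • (b - a)) ^ 3)
      MeasureTheory.volume 0 1 := by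
    refine ContinuousOn.intervalIntegrable ?_
    rw [uIcc_of_le zero_le_one]
    refine ContinuousOn.div continuousOn_const ?_ fun τ hτ => pow_ne_zero 3 (norm3_pos (h τ hτ)).ne'
    exact ((continuous_norm3.comp (by fun_prop)).pow 3).continuousOn
  refine ⟨hintg, ?_⟩
  rw [intervalIntegral.integral_eq_sub_of_hasDerivAt
    (f := fun u : ℝ => u * segKernel a (a + u • (b - a))) (fun τ hτ => ?_) hintg]
  · simp
  · rw [uIcc_of_le zero_le_one] at hτ
    refine hasDerivAt_mul_segKernel (by simpa using h 0 (by simp)) (h τ hτ)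
      (norm3_mul_add_dot3_pos fun t ht => ?_)
    have := h (t * τ) ⟨mul_nonneg ht.1 hτ.1, mul_le_one₀ ht.2 hτ.1 hτ.2⟩
    rwa [add_sub_cancel_left, smul_smul]

end BiotSavart

section PolygonalLoop

lemma polyLoop_natCast (P : ℕ → Fin 3 → ℝ) (i : ℕ) : polyLoop P i = P i := by
  simp [polyLoop]

lemma polyLoop_of_mem_Ico (P : ℕ → Fin 3 → ℝ) {i : ℕ} {t : ℝ} (ht : t ∈ Ico (i : ℝ) (i + 1)) :
    polyLoop P t = P i + (t - i) • (P (i + 1) - P i) := by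
  have h : ⌊t⌋ = (i : ℤ) := Int.floor_eq_iff.2 (by simpa using ht)
  simp [polyLoop, h]

lemma deriv_polyLoop_of_mem_Ioo (P : ℕ → Fin 3 → ℝ) {i : ℕ} {t : ℝ}
    (ht : t ∈ Ioo (i : ℝ) (i + 1)) : deriv (polyLoop P) t = P (i + 1) - P i := by
  have h : polyLoop P =ᶠ[nhds t] fun u => P i + (u - i) • (P (i + 1) - P i) := by
    filter_upwards [Ioo_mem_nhds ht.1 ht.2] with u hu
    exact polyLoop_of_mem_Ico P (Ioo_subset_Ico_self hu)
  rw [h.deriv_eq]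
  have := (((hasDerivAt_id t).sub_const (i : ℝ)).smul_const (P (i + 1) - P i)).const_add (P i)
  simpa using this.deriv

/-- A point off the polygonal loop is off each of its edges. -/
lemma edge_ne_zero_of_forall_ne_polyLoop {m : ℕ} {P : ℕ → Fin 3 → ℝ} {r : Fin 3 → ℝ}
    (hr : ∀ t ∈ Icc (0 : ℝ) m, r ≠ polyLoop P t) {i : ℕ} (hi : i < m) {τ : ℝ}
    (hτ : τ ∈ Icc (0 : ℝ) 1) : P i - r + τ • (P (i + 1) - r - (P i - r)) ≠ 0 := by
  have him : (i : ℝ) + 1 ≤ m := by exact_mod_cast hi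
  have hi0 : (0 : ℝ) ≤ i := Nat.cast_nonneg i
  intro h
  rw [sub_sub_sub_cancel_right] at h
  have h' : r = P i + τ • (P (i + 1) - P i) := by
    rw [← sub_eq_zero, ← neg_eq_zero, ← h]
    abel
  rcases hτ.2.lt_or_eq with h1 | h1
  · refine hr (i + τ) ⟨by linarith [hτ.1], by linarith⟩ ?_
    rw [polyLoop_of_mem_Ico P (i := i) ⟨by linarith [hτ.1], by linarith⟩, h']
    simp
  · refine hr ((i + 1 : ℕ) : ℝ) ⟨by positivity, by push_cast; linarith⟩ ?_
    rw [polyLoop_natCast, h', h1, one_smul, add_sub_cancel]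

lemma vertex_sub_ne_zero {m : ℕ} {P : ℕ → Fin 3 → ℝ} {r : Fin 3 → ℝ}
    (hr : ∀ t ∈ Icc (0 : ℝ) m, r ≠ polyLoop P t) {i : ℕ} (hi : i ≤ m) : P i - r ≠ 0 := by
  refine sub_ne_zero.2 fun h => hr i ⟨by positivity, by exact_mod_cast hi⟩ ?_
  rw [polyLoop_natCast, h]

lemma edge_nondegenerate {m : ℕ} {P : ℕ → Fin 3 → ℝ} {r : Fin 3 → ℝ}
    (hr : ∀ t ∈ Icc (0 : ℝ) m, r ≠ polyLoop P t) {i : ℕ} (hi : i < m) :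
    0 < norm3 (P i - r) * norm3 (P (i + 1) - r) + dot3 (P i - r) (P (i + 1) - r) :=
  norm3_mul_add_dot3_pos fun _ ht => edge_ne_zero_of_forall_ne_polyLoop hr hi ht

/-- The Gauss integrand over one edge integrates to the Biot–Savart contribution of that edge. -/
lemma integral_gauss_edge {P : ℕ → Fin 3 → ℝ} {r h : Fin 3 → ℝ} {i : ℕ}
    (hr : ∀ τ ∈ Icc (0 : ℝ) 1, P i - r + τ • (P (i + 1) - r - (P i - r)) ≠ 0) :
    IntervalIntegrable (fun t => dot3 (cross3 h (deriv (polyLoop P) t)) (r - polyLoop P t)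
        / norm3 (r - polyLoop P t) ^ 3) MeasureTheory.volume i (i + 1 : ℕ) ∧
      ∫ t in (i : ℝ)..(i + 1 : ℕ), dot3 (cross3 h (deriv (polyLoop P) t)) (r - polyLoop P t)
        / norm3 (r - polyLoop P t) ^ 3 = dot3 (Phi (P i) (P (i + 1)) r) h := by
  obtain ⟨hintg, hval⟩ := integral_one_div_norm3_pow hr
  set a := P i - r with ha_def
  set b := P (i + 1) - r with hb_def
  set F : ℝ → ℝ := fun τ => 1 / norm3 (a + τ • (b - a)) ^ 3 with hF
  have hae : ∀ᵐ t : ℝ, t ∈ uIoc (i : ℝ) (i + 1 : ℕ) →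
      dot3 (cross3 a b) h * F (t - i) = dot3 (cross3 h (deriv (polyLoop P) t)) (r - polyLoop P t)
        / norm3 (r - polyLoop P t) ^ 3 := by
    have hne : ∀ᵐ t : ℝ, t ≠ (i + 1 : ℕ) := by
      simp [MeasureTheory.ae_iff]
    filter_upwards [hne] with t ht hmem
    rw [uIoc_of_le (by push_cast; linarith)] at hmem
    push_cast at hmem ht
    have hmem' : t ∈ Ioo (i : ℝ) (i + 1) := ⟨hmem.1, lt_of_le_of_ne hmem.2 ht⟩
    rw [deriv_polyLoop_of_mem_Ioo P hmem', polyLoop_of_mem_Ico P (Ioo_subset_Ico_self hmem')]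
    have e1 : P (i + 1) - P i = b - a := by rw [ha_def, hb_def]; abel
    have e2 : r - (P i + (t - i) • (P (i + 1) - P i)) = -(a + (t - i) • (b - a)) := by
      rw [e1, ha_def]; abel
    have e3 : ∀ v : Fin 3 → ℝ, norm3 (-v) = norm3 v := fun v => by simp [norm3, dot3]
    rw [e2, e3, e1, hF, mul_one_div]
    congr 1
    simp [dot3, cross3, cross_apply]
    ring
  have hintg' : IntervalIntegrable (fun t => dot3 (cross3 a b) h * F (t - i))
      MeasureTheory.volume i (i + 1 : ℕ) := by
    have := (hintg.comp_sub_right (i : ℝ)).const_mul (dot3 (cross3 a b) h)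
    rwa [zero_add, add_comm (1 : ℝ), ← Nat.cast_succ] at this
  refine ⟨hintg'.congr_ae ?_, ?_⟩
  · rw [Filter.EventuallyEq, MeasureTheory.ae_restrict_iff' measurableSet_uIoc]
    exact hae
  · rw [← intervalIntegral.integral_congr_ae hae, intervalIntegral.integral_const_mul,
      intervalIntegral.integral_comp_sub_right F, sub_self, Nat.cast_succ, add_sub_cancel_left,
      hval, Phi_eq_segKernel_smul (by simpa using hr 0 (by simp)) (by simpa using hr 1 (by simp))]
    simp only [dot3, Pi.smul_apply, smul_eq_mul]
    ring

/-- Inner Gauss integral: integrating over the whole polygon gives the total field. -/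
lemma integral_gauss_polyLoop {m : ℕ} {P : ℕ → Fin 3 → ℝ} {r : Fin 3 → ℝ}
    (hr : ∀ t ∈ Icc (0 : ℝ) m, r ≠ polyLoop P t) (h : Fin 3 → ℝ) :
    ∫ t in (0 : ℝ)..m, dot3 (cross3 h (deriv (polyLoop P) t)) (r - polyLoop P t)
        / norm3 (r - polyLoop P t) ^ 3
      = ∑ i ∈ Finset.range m, dot3 (Phi (P i) (P (i + 1)) r) h := by
  have hedge : ∀ i < m, ∀ τ ∈ Icc (0 : ℝ) 1,
      P i - r + τ • (P (i + 1) - r - (P i - r)) ≠ 0 :=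
    fun i hi τ hτ => edge_ne_zero_of_forall_ne_polyLoop hr hi hτ
  have := intervalIntegral.sum_integral_adjacent_intervals (a := fun k : ℕ => (k : ℝ)) (n := m)
    (fun i hi => (integral_gauss_edge (h := h) (hedge i hi)).1)
  rw [Nat.cast_zero] at this
  rw [← this]
  exact Finset.sum_congr rfl fun i hi => (integral_gauss_edge (hedge i (Finset.mem_range.1 hi))).2

lemma dot3_Bfield (m : ℕ) (P : ℕ → Fin 3 → ℝ) (r h : Fin 3 → ℝ) :
    dot3 (Bfield m P r) h
      = (4 * Real.pi)⁻¹ * ∑ i ∈ Finset.range m, dot3 (Phi (P i) (P (i + 1)) r) h := by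
  simp only [dot3, Bfield, Pi.smul_apply, Finset.sum_apply, smul_eq_mul, Finset.sum_add_distrib,
    Finset.sum_mul, mul_add, mul_assoc, Finset.mul_sum]

end PolygonalLoop

section Holonomy

/-- The projections attached to the directions from `r` to the vertices `P 0, …, P m`. -/
def vertexProj (m : ℕ) (P : ℕ → Fin 3 → ℝ) (r : Fin 3 → ℝ) (k : ℕ) :
    Matrix (Fin 2) (Fin 2) ℂ :=
  bloch (unit3 (P (min k m) - r))

/-- The derivative of `vertexProj` when `r` moves with velocity `h`. -/
def vertexProjDeriv (m : ℕ) (P : ℕ → Fin 3 → ℝ) (r h : Fin 3 → ℝ) (k : ℕ) :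
    Matrix (Fin 2) (Fin 2) ℂ :=
  halfPauli (unit3Deriv (P (min k m) - r) (-h))

/-- A complex valued function whose phase is half of the solid angle of the polygon seen from
`r`. -/
def holonomy (m : ℕ) (P : ℕ → Fin 3 → ℝ) (r : Fin 3 → ℝ) : ℂ :=
  (chainProd (vertexProj m P r) m).trace

/-- The logarithmic derivative of `holonomy` at `r` in the direction `h`. -/
def holonomyRate (m : ℕ) (P : ℕ → Fin 3 → ℝ) (r h : Fin 3 → ℝ) : ℂ :=
  ∑ i ∈ Finset.range m, edgeRate (vertexProj m P r) (vertexProjDeriv m P r h) i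

variable {m : ℕ} {P : ℕ → Fin 3 → ℝ} {r : Fin 3 → ℝ}

lemma vertexProj_mul_self (hr : ∀ t ∈ Icc (0 : ℝ) m, r ≠ polyLoop P t) (k : ℕ) :
    vertexProj m P r k * vertexProj m P r k = vertexProj m P r k :=
  bloch_mul_self (dot3_unit3_self (vertex_sub_ne_zero hr (min_le_right k m)))

lemma det_vertexProj (hr : ∀ t ∈ Icc (0 : ℝ) m, r ≠ polyLoop P t) (k : ℕ) :
    (vertexProj m P r k).det = 0 :=
  det_bloch (dot3_unit3_self (vertex_sub_ne_zero hr (min_le_right k m)))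

lemma trace_vertexProj_mul_ne_zero (hr : ∀ t ∈ Icc (0 : ℝ) m, r ≠ polyLoop P t) {k : ℕ}
    (hk : k < m) : (vertexProj m P r (k + 1) * vertexProj m P r k).trace ≠ 0 := by
  rw [vertexProj, vertexProj, min_eq_left hk.le, min_eq_left (Nat.succ_le_of_lt hk)]
  exact trace_bloch_unit3_ne_zero (vertex_sub_ne_zero hr hk.le) (vertex_sub_ne_zero hr hk)
    (edge_nondegenerate hr hk)

lemma vertexProj_last (hclosed : P m = P 0) : vertexProj m P r m = vertexProj m P r 0 := by
  simp [vertexProj, hclosed]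

lemma holonomy_ne_zero (hclosed : P m = P 0) (hr : ∀ t ∈ Icc (0 : ℝ) m, r ≠ polyLoop P t) :
    holonomy m P r ≠ 0 := by
  intro h
  have h0 : vertexProj m P r 0 ≠ 0 := fun h0 => by
    have := trace_bloch (unit3 (P (min 0 m) - r))
    rw [← vertexProj, h0, Matrix.trace_zero] at this
    exact zero_ne_one this
  refine chainProd_ne_zero (vertexProj_mul_self hr) (det_vertexProj hr) h0
    (fun k hk => trace_vertexProj_mul_ne_zero hr hk) m le_rfl ?_
  rw [chainProd_eq_trace_smul (vertexProj_mul_self hr) (det_vertexProj hr 0)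
    (vertexProj_last hclosed)]
  rw [holonomy] at h
  rw [h, zero_smul]

lemma holonomyRate_im (hr : ∀ t ∈ Icc (0 : ℝ) m, r ≠ polyLoop P t) (h : Fin 3 → ℝ) :
    (holonomyRate m P r h).im
      = (∑ i ∈ Finset.range m, dot3 (Phi (P i) (P (i + 1)) r) h) / 2 := by
  rw [holonomyRate, Complex.im_sum, Finset.sum_div]
  refine Finset.sum_congr rfl fun i hi => ?_
  have hi := Finset.mem_range.1 hi
  have e1 : min i m = i := min_eq_left hi.le
  have e2 : min (i + 1) m = i + 1 := min_eq_left (Nat.succ_le_of_lt hi)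
  have ha := vertex_sub_ne_zero hr hi.le
  have hb := vertex_sub_ne_zero hr (Nat.succ_le_of_lt hi)
  have hD := edge_nondegenerate hr hi
  have := im_edgeRate_bloch (a := fun k => P (min k m) - r) (v := h) (k := i)
    (by simpa only [e1] using ha) (by simpa only [e2] using hb) (by simpa only [e1, e2] using hD)
  simp only [e1, e2] at this
  refine this.trans ?_
  rw [Phi_eq_segKernel_smul ha hb]
  simp only [dot3, Pi.smul_apply, smul_eq_mul]
  ring

section Calculus

lemma continuousOn_unit3 : ContinuousOn unit3 {0}ᶜ := by
  unfold unit3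
  exact (continuous_norm3.continuousOn.inv₀ fun a ha => (norm3_pos ha).ne').smul continuousOn_id

lemma continuous_bloch : Continuous bloch :=
  continuous_const.add halfPauli.continuous_of_finiteDimensional

lemma continuousOn_vertexProj {X : Type*} [TopologicalSpace X] {S : Set X} {f : X → Fin 3 → ℝ}
    (hf : ContinuousOn f S) (hoff : ∀ x ∈ S, ∀ t ∈ Icc (0 : ℝ) m, f x ≠ polyLoop P t) (k : ℕ) :
    ContinuousOn (fun x => vertexProj m P (f x) k) S :=
  continuous_bloch.comp_continuousOn (continuousOn_unit3.comp (continuousOn_const.sub hf)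
    fun x hx => vertex_sub_ne_zero (hoff x hx) (min_le_right k m))

lemma continuousOn_holonomy {X : Type*} [TopologicalSpace X] {S : Set X} {f : X → Fin 3 → ℝ}
    (hf : ContinuousOn f S) (hoff : ∀ x ∈ S, ∀ t ∈ Icc (0 : ℝ) m, f x ≠ polyLoop P t) :
    ContinuousOn (fun x => holonomy m P (f x)) S := by
  have hchain : ∀ k, ContinuousOn (fun x => chainProd (vertexProj m P (f x)) k) S := by
    intro k
    induction k with
    | zero => exact continuousOn_vertexProj hf hoff 0
    | succ k ih => exact ih.mul (continuousOn_vertexProj hf hoff (k + 1))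
  exact (continuous_id.matrix_trace).comp_continuousOn (hchain m)

lemma continuousOn_vertexProjDeriv {X : Type*} [TopologicalSpace X] {S : Set X}
    {f g : X → Fin 3 → ℝ} (hf : ContinuousOn f S) (hg : ContinuousOn g S)
    (hoff : ∀ x ∈ S, ∀ t ∈ Icc (0 : ℝ) m, f x ≠ polyLoop P t) (k : ℕ) :
    ContinuousOn (fun x => vertexProjDeriv m P (f x) (g x) k) S := by
  refine halfPauli.continuous_of_finiteDimensional.comp_continuousOn ?_
  have ha : ContinuousOn (fun x => P (min k m) - f x) S := continuousOn_const.sub hf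
  have hn : ContinuousOn (fun x => (norm3 (P (min k m) - f x))⁻¹) S :=
    (continuous_norm3.comp_continuousOn ha).inv₀ fun x hx =>
      (norm3_pos (vertex_sub_ne_zero (hoff x hx) (min_le_right k m))).ne'
  have hdot : ContinuousOn (fun x => dot3 (P (min k m) - f x) (-g x)) S := by
    unfold dot3
    fun_prop
  exact (hn.smul hg.neg).sub ((hdot.mul (hn.pow 3)).smul ha)

lemma continuousOn_holonomyRate {X : Type*} [TopologicalSpace X] {S : Set X}
    {f g : X → Fin 3 → ℝ} (hf : ContinuousOn f S) (hg : ContinuousOn g S)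
    (hoff : ∀ x ∈ S, ∀ t ∈ Icc (0 : ℝ) m, f x ≠ polyLoop P t) :
    ContinuousOn (fun x => holonomyRate m P (f x) (g x)) S := by
  refine continuousOn_finsetSum _ fun i hi => ?_
  have htr := continuous_id.matrix_trace (X := Matrix (Fin 2) (Fin 2) ℂ)
  have hp := continuousOn_vertexProj hf hoff
  have hp' := continuousOn_vertexProjDeriv hf hg hoff
  exact ((htr.comp_continuousOn (((hp (i + 1)).mul (hp i)).mul (hp' i))).add
    (htr.comp_continuousOn (((hp (i + 1)).mul (hp i)).mul (hp' (i + 1))))).div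
    (htr.comp_continuousOn ((hp (i + 1)).mul (hp i)))
    fun x hx => trace_vertexProj_mul_ne_zero (hoff x hx) (Finset.mem_range.1 hi)

open scoped Matrix.Norms.Operator in
lemma hasDerivAt_holonomy (hclosed : P m = P 0) {γ : ℝ → Fin 3 → ℝ} {γ' : Fin 3 → ℝ} {s : ℝ}
    (hγ : HasDerivAt γ γ' s) (hoff : ∀ t ∈ Icc (0 : ℝ) m, γ s ≠ polyLoop P t) :
    HasDerivAt (fun u => holonomy m P (γ u))
      (holonomyRate m P (γ s) γ' * holonomy m P (γ s)) s := by
  have hne : ∀ k, P (min k m) - γ s ≠ 0 := fun k => vertex_sub_ne_zero hoff (min_le_right k m)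
  have ha : ∀ k, HasDerivAt (fun u => P (min k m) - γ u) (-γ') s := fun k => hγ.const_sub _
  have hd : ∀ k, HasDerivAt (fun u => vertexProj m P (γ u) k) (vertexProjDeriv m P (γ s) γ' k) s :=
    fun k => hasDerivAt_bloch_unit3 (ha k) (hne k)
  refine hasDerivAt_trace_chainProd (p := fun u => vertexProj m P (γ u))
    (vertexProj_mul_self hoff) (det_vertexProj hoff) hd (fun k => ?_)
    (vertexProj_last hclosed) (by simp [vertexProjDeriv, hclosed])
    fun k hk => trace_vertexProj_mul_ne_zero hoff hk
  refine (hd k).unique (((hd k).mul (hd k)).congr_of_eventuallyEq ?_)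
  filter_upwards [(ha k).continuousAt.eventually_ne (hne k)] with u hu
  exact (bloch_mul_self (dot3_unit3_self hu)).symm

end Calculus

end Holonomy

section Winding

/-- A solution of `Z' = c Z` on `[0, 1]` is an exponential. -/
lemma exists_exp_integral {Z c : ℝ → ℂ} (hc : ContinuousOn c (Icc 0 1))
    (hZ : ∀ s ∈ Icc (0 : ℝ) 1, HasDerivAt Z (c s * Z s) s) :
    ∃ C : ℝ → ℂ, Continuous C ∧ C 0 = 0 ∧ C 1 = ∫ s in (0 : ℝ)..1, c s ∧
      ∀ s ∈ Icc (0 : ℝ) 1, Z s = Z 0 * Complex.exp (C s) := by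
  set c' : ℝ → ℂ := IccExtend zero_le_one ((Icc (0 : ℝ) 1).domRestrict c) with hc'
  have hcont : Continuous c' := (continuousOn_iff_continuous_domRestrict.1 hc).Icc_extend'
  have heq : ∀ s ∈ Icc (0 : ℝ) 1, c' s = c s := fun s hs => by
    rw [hc', IccExtend_of_mem _ _ hs, domRestrict_apply]
  have hC : ∀ s, HasDerivAt (fun t => ∫ u in (0 : ℝ)..t, c' u) (c' s) s := fun s =>
    intervalIntegral.integral_hasDerivAt_right (hcont.intervalIntegrable _ _)
      (hcont.stronglyMeasurableAtFilter _ _) hcont.continuousAt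
  refine ⟨fun t => ∫ u in (0 : ℝ)..t, c' u,
    continuous_iff_continuousAt.2 fun s => (hC s).continuousAt, by simp, ?_, ?_⟩
  · refine intervalIntegral.integral_congr fun s hs => heq s ?_
    rwa [uIcc_of_le zero_le_one] at hs
  · have hder : ∀ s ∈ Icc (0 : ℝ) 1,
        HasDerivAt (fun t => Z t * Complex.exp (-∫ u in (0 : ℝ)..t, c' u)) 0 s := by
      intro s hs
      refine ((hZ s hs).mul (hC s).fun_neg.cexp).congr_deriv ?_
      rw [heq s hs]
      ring
    have hconst := constant_of_has_deriv_right_zero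
      (fun s hs => (hder s hs).continuousAt.continuousWithinAt)
      (fun s hs => (hder s (Ico_subset_Icc_self hs)).hasDerivWithinAt)
    intro s hs
    have h := hconst s hs
    simp only [intervalIntegral.integral_same, neg_zero, Complex.exp_zero, mul_one] at h
    rw [← h, mul_assoc, ← Complex.exp_add, neg_add_cancel, Complex.exp_zero, mul_one]

/-- A continuous function on `[0, 1]` with constant exponential takes equal values at the
endpoints. -/
lemma eq_of_exp_eq_const {φ : ℝ → ℂ} (hφ : ContinuousOn φ (Icc 0 1)) {w : ℂ}
    (h : ∀ s ∈ Icc (0 : ℝ) 1, Complex.exp (φ s) = w) : φ 1 = φ 0 := by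
  have h0 : (0 : ℝ) ∈ Icc (0 : ℝ) 1 := by simp
  have hsub : ∀ s ∈ Icc (0 : ℝ) 1, ∃ n : ℤ, φ s = φ 0 + n * (2 * Real.pi * Complex.I) :=
    fun s hs => Complex.exp_eq_exp_iff_exists_int.1 ((h s hs).trans (h 0 h0).symm)
  have hdisc : DiscreteTopology (range ((↑) : ℤ → ℝ)) :=
    Int.isClosedEmbedding_coe_real.isEmbedding.toHomeomorph.symm.isEmbedding.discreteTopology
  have hcont : ContinuousOn (fun s => (φ s - φ 0).im / (2 * Real.pi)) (Icc 0 1) :=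
    (Complex.continuous_im.comp_continuousOn (hφ.sub continuousOn_const)).div_const _
  have hmaps : MapsTo (fun s => (φ s - φ 0).im / (2 * Real.pi)) (Icc 0 1)
      (range ((↑) : ℤ → ℝ)) := by
    intro s hs
    obtain ⟨n, hn⟩ := hsub s hs
    refine ⟨n, ?_⟩
    have := Real.pi_pos.ne'
    simp [hn]
  have heq := isPreconnected_Icc.constant_of_mapsTo ⟨hdisc⟩ hcont hmaps
    (right_mem_Icc.2 zero_le_one) (left_mem_Icc.2 zero_le_one)
  obtain ⟨n, hn⟩ := hsub 1 (by simp)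
  have hpi := Real.pi_pos.ne'
  simp [hn, hpi] at heq
  simp [hn, heq]

/-- The phase of the holonomy along a curve accumulates `2π` times the circulation of `Bfield`. -/
lemma exists_phase {m : ℕ} {P : ℕ → Fin 3 → ℝ} (hclosed : P m = P 0) {γ : ℝ → Fin 3 → ℝ}
    (hγ : ContDiff ℝ 1 γ)
    (hdisjoint : ∀ s ∈ Icc (0 : ℝ) 1, ∀ t ∈ Icc (0 : ℝ) (m : ℝ), γ s ≠ polyLoop P t) :
    ∃ C : ℝ → ℂ, Continuous C ∧ C 0 = 0 ∧
      (∫ t in (0 : ℝ)..1, dot3 (Bfield m P (γ t)) (deriv γ t)) = (C 1).im / (2 * Real.pi) ∧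
      ∀ s ∈ Icc (0 : ℝ) 1, holonomy m P (γ s) = holonomy m P (γ 0) * Complex.exp (C s) := by
  have hrate : ContinuousOn (fun s => holonomyRate m P (γ s) (deriv γ s)) (Icc 0 1) :=
    continuousOn_holonomyRate hγ.continuous.continuousOn
      (hγ.continuous_deriv le_rfl).continuousOn hdisjoint
  obtain ⟨C, hC, hC0, hC1, hexp⟩ := exists_exp_integral (Z := fun s => holonomy m P (γ s)) hrate
    fun s hs => hasDerivAt_holonomy hclosed
      ((hγ.differentiable one_ne_zero).differentiableAt.hasDerivAt) (hdisjoint s hs)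
  refine ⟨C, hC, hC0, ?_, hexp⟩
  have hintg : IntervalIntegrable (fun s => holonomyRate m P (γ s) (deriv γ s))
      MeasureTheory.volume 0 1 := by
    refine ContinuousOn.intervalIntegrable ?_
    rwa [uIcc_of_le zero_le_one]
  have him := Complex.imCLM.intervalIntegral_comp_comm hintg
  simp only [Complex.imCLM_apply] at him
  rw [hC1, ← him, ← intervalIntegral.integral_div]
  refine intervalIntegral.integral_congr fun s hs => ?_
  rw [uIcc_of_le zero_le_one] at hs
  rw [dot3_Bfield, holonomyRate_im (hdisjoint s hs)]
  have := Real.pi_pos.ne'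
  field_simp
  ring

/-- Along a free null-homotopy of loops, a nonvanishing continuous function does not wind. -/
lemma phase_eq_zero_of_nullhomotopic {g : ℝ × ℝ → ℂ} (hg : Continuous g) (hg0 : ∀ p, g p ≠ 0)
    {C : ℝ → ℂ} (hC : Continuous C) (hC0 : C 0 = 0)
    (hbottom : ∀ s ∈ Icc (0 : ℝ) 1, g (s, 0) = g (0, 0) * Complex.exp (C s))
    (htop : ∀ s ∈ Icc (0 : ℝ) 1, g (s, 1) = g (0, 1))
    (hsides : ∀ u ∈ Icc (0 : ℝ) 1, g (0, u) = g (1, u)) : C 1 = 0 := by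
  obtain ⟨⟨f, hf⟩, ⟨-, hlift⟩, -⟩ := Complex.isCoveringMapOn_exp.existsUnique_continuousMap_lifts
    ⟨g, hg⟩ (a₀ := 0) (Complex.exp_log (hg0 0)) hg0
  have hfg : ∀ p, Complex.exp (f p) = g p := fun p => congrFun hlift p
  have h1 := eq_of_exp_eq_const (φ := fun s => f (s, 0) - C s) (w := g (0, 0))
    (by fun_prop) fun s hs => by
      rw [Complex.exp_sub, hfg, hbottom s hs, mul_div_cancel_right₀ _ (Complex.exp_ne_zero _)]
  have h2 := eq_of_exp_eq_const (φ := fun u => f (1, u) - f (0, u)) (w := 1)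
    (by fun_prop) fun u hu => by
      rw [Complex.exp_sub, hfg, hfg, hsides u hu, div_self (hg0 _)]
  have h3 := eq_of_exp_eq_const (φ := fun s => f (s, 1)) (w := g (0, 1))
    (by fun_prop) fun s hs => by rw [hfg, htop s hs]
  linear_combination h3 - h1 - h2 + hC0

end Winding

/-- For a closed polygonal obstacle skeleton `L` in ℝ³ and a smooth closed robot loop `γ`
disjoint from `L`, the circulation `∮_γ B(r)·dr` of the summed analytic Biot–Savart field
equals the Gauss linking number of `γ` and `L`; in particular it is an integer, and it
vanishes when `γ` does not enclose `L` (i.e. when `γ` is null-homotopic in the complement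
of `L`). -/
theorem hSignature_eq_linkingNumber (m : ℕ) (hm : 0 < m) (P : ℕ → Fin 3 → ℝ)
    (hclosed : P m = P 0)
    (γ : ℝ → Fin 3 → ℝ) (hγ : ContDiff ℝ 1 γ) (hγloop : γ 0 = γ 1)
    (hdisjoint : ∀ s ∈ Icc (0 : ℝ) 1, ∀ t ∈ Icc (0 : ℝ) (m : ℝ), γ s ≠ polyLoop P t) :
    (∫ t in (0 : ℝ)..1, dot3 (Bfield m P (γ t)) (deriv γ t))
        = gaussLinkingIntegral m P γ ∧
    (∃ n : ℤ, gaussLinkingIntegral m P γ = n) ∧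
    ((∃ η : ℝ × ℝ → Fin 3 → ℝ, Continuous η ∧
        (∀ s ∈ Icc (0 : ℝ) 1, η (s, 0) = γ s) ∧
        (∀ s ∈ Icc (0 : ℝ) 1, ∃ c, η (s, 1) = c ∧ ∀ s' ∈ Icc (0 : ℝ) 1, η (s', 1) = c) ∧
        (∀ u ∈ Icc (0 : ℝ) 1, η (0, u) = η (1, u)) ∧
        (∀ p ∈ Icc (0 : ℝ) 1 ×ˢ Icc (0 : ℝ) 1,
          ∀ t ∈ Icc (0 : ℝ) (m : ℝ), η p ≠ polyLoop P t)) →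
      gaussLinkingIntegral m P γ = 0) := by
  have hgauss : (∫ t in (0 : ℝ)..1, dot3 (Bfield m P (γ t)) (deriv γ t))
      = gaussLinkingIntegral m P γ := by
    rw [gaussLinkingIntegral, ← intervalIntegral.integral_const_mul]
    refine intervalIntegral.integral_congr fun s hs => ?_
    rw [uIcc_of_le zero_le_one] at hs
    rw [dot3_Bfield, integral_gauss_polyLoop (hdisjoint s hs)]
  obtain ⟨C, hC, hC0, hcirc, hexp⟩ := exists_phase hclosed hγ hdisjoint
  refine ⟨hgauss, ?_, ?_⟩
  · have h1 := hexp 1 (by simp)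
    rw [← hγloop] at h1
    have h0 := holonomy_ne_zero hclosed (hdisjoint 0 (by simp))
    obtain ⟨n, hn⟩ := Complex.exp_eq_one_iff.1 ((left_eq_mul₀ h0).1 h1)
    refine ⟨n, ?_⟩
    have := Real.pi_pos.ne'
    rw [← hgauss, hcirc, hn]
    simp
  · rintro ⟨η, hη, hη0, hη1, hηloop, hηoff⟩
    let q : ℝ × ℝ → ℝ × ℝ := fun x =>
      (projIcc (0 : ℝ) 1 zero_le_one x.1, projIcc (0 : ℝ) 1 zero_le_one x.2)
    have hq : Continuous q := by
      have := continuous_projIcc (a := (0 : ℝ)) (b := 1) (h := zero_le_one)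
      exact (continuous_subtype_val.comp (this.comp continuous_fst)).prodMk
        (continuous_subtype_val.comp (this.comp continuous_snd))
    have hqmem : ∀ x, q x ∈ Icc (0 : ℝ) 1 ×ˢ Icc (0 : ℝ) 1 := fun x =>
      ⟨(projIcc (0 : ℝ) 1 zero_le_one x.1).2, (projIcc (0 : ℝ) 1 zero_le_one x.2).2⟩
    have hqid : ∀ s ∈ Icc (0 : ℝ) 1, ∀ u ∈ Icc (0 : ℝ) 1, q (s, u) = (s, u) := by
      intro s hs u hu
      simp only [q, projIcc_of_mem _ hs, projIcc_of_mem _ hu]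
    have hoff : ∀ x, ∀ t ∈ Icc (0 : ℝ) (m : ℝ), η (q x) ≠ polyLoop P t :=
      fun x => hηoff _ (hqmem x)
    have hl : (0 : ℝ) ∈ Icc (0 : ℝ) 1 := by simp
    have hr : (1 : ℝ) ∈ Icc (0 : ℝ) 1 := by simp
    have hg : Continuous fun x => holonomy m P (η (q x)) := by
      rw [← continuousOn_univ]
      exact continuousOn_holonomy (hη.comp hq).continuousOn fun x _ => hoff x
    have hzero := phase_eq_zero_of_nullhomotopic hg (fun x => holonomy_ne_zero hclosed (hoff x))
      hC hC0
      (fun s hs => by rw [hqid s hs 0 hl, hqid 0 hl 0 hl, hη0 s hs, hη0 0 hl, hexp s hs])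
      (fun s hs => by
        obtain ⟨c, hc, hc'⟩ := hη1 s hs
        rw [hqid s hs 1 hr, hqid 0 hl 1 hr, hc, hc' 0 hl])
      (fun u hu => by rw [hqid 0 hl u hu, hqid 1 hr u hu, hηloop u hu])
    rw [← hgauss, hcirc, hzero]
    simp

end
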